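/- Let L ⊆ ℝ^n be a star set with Borel measurable radial function ρ_L. Then ∫_{S^{n-1}} V_{n-1}(L ∩ w^⊥) d*w = b_{n−1} · ∫_{S^{n-1}} ρ_L(θ)^{n−1} d*θ, the equality holding in [0,∞]. Equivalently, the mean central hyperplane section volume of L equals (b_{n-1}/b_n) times the (n−1)-st dual elementary mixed volume Ṽ_{n-1}(L) = b_n ∫_{S^{n-1}} ρ_L^{n-1} d*θ. (Case k = n−1 of the paper's identity Ṽ_k(L) = (b_n/b_k) ∫_{G_{n,k}} V_k(L ∩ τ₀) d*τ₀.) -/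

import Mathlib

open MeasureTheory Metric Real
open scoped ENNReal NNReal

noncomputable section

/-- The normalized (probability) surface measure `d*θ` on the unit sphere of
`EuclideanSpace ℝ (Fin n)`. -/
def sphMeasure (n : ℕ) : Measure (sphere (0 : EuclideanSpace ℝ (Fin n)) 1) :=
  ((volume : Measure (EuclideanSpace ℝ (Fin n))).toSphere Set.univ)⁻¹ •
    (volume : Measure (EuclideanSpace ℝ (Fin n))).toSphere

/-- The hyperplane Radon transform: `Rf(θ,t) = ∫_{θ^⊥} f(tθ + y) dy`, where `θ^⊥` carries its
canonical Lebesgue measure as an (n-1)-dimensional inner product space. -/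
def Radon (n : ℕ) (f : EuclideanSpace ℝ (Fin n) → ℝ≥0∞)
    (θ : sphere (0 : EuclideanSpace ℝ (Fin n)) 1) (t : ℝ) : ℝ≥0∞ :=
  ∫⁻ y : ((ℝ ∙ (θ : EuclideanSpace ℝ (Fin n)))ᗮ),
    f (t • (θ : EuclideanSpace ℝ (Fin n)) + (y : EuclideanSpace ℝ (Fin n)))

/-- `b_m = π^{m/2}/Γ(m/2+1)`, the volume of the m-dimensional unit ball. -/
def ballVol (m : ℕ) : ℝ := Real.pi ^ ((m : ℝ) / 2) / Real.Gamma ((m : ℝ) / 2 + 1)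

/-- The radial function of a star set: `ρ_L(θ) = sup {c ≥ 0 : cθ ∈ L} ∈ [0,∞]`. -/
def radial (n : ℕ) (L : Set (EuclideanSpace ℝ (Fin n)))
    (θ : sphere (0 : EuclideanSpace ℝ (Fin n)) 1) : ℝ≥0∞ :=
  ⨆ r : {r : ℝ≥0 // (r : ℝ) • (θ : EuclideanSpace ℝ (Fin n)) ∈ L}, (r.1 : ℝ≥0∞)

section Aux

set_option linter.unusedSectionVars false

variable {E : Type*} [NormedAddCommGroup E] [InnerProductSpace ℝ E] [FiniteDimensional ℝ E]
  [MeasurableSpace E] [BorelSpace E]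

/-- The uniform probability measure of the unit sphere, seen on the ambient space. -/
def uSph (E : Type*) [NormedAddCommGroup E] [InnerProductSpace ℝ E] [FiniteDimensional ℝ E]
    [MeasurableSpace E] [BorelSpace E] : Measure E :=
  Measure.map Subtype.val
    (((volume : Measure E).toSphere Set.univ)⁻¹ • (volume : Measure E).toSphere)

lemma sphere_emb : MeasurableEmbedding (Subtype.val : sphere (0 : E) 1 → E) :=
  MeasurableEmbedding.subtype_coe isClosed_sphere.measurableSet

lemma toSphere_univ_ne_zero [Nontrivial E] : (volume : Measure E).toSphere Set.univ ≠ 0 := by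
  rw [Ne, Measure.measure_univ_eq_zero]
  exact Measure.toSphere_ne_zero _

instance uSph_prob [Nontrivial E] : IsProbabilityMeasure (uSph E) := by
  constructor
  rw [uSph, sphere_emb.map_apply, Set.preimage_univ, Measure.smul_apply, smul_eq_mul]
  exact ENNReal.inv_mul_cancel toSphere_univ_ne_zero (measure_ne_top _ _)

lemma uSph_norm : ∀ᵐ x ∂(uSph E), ‖x‖ = 1 := by
  rw [uSph, sphere_emb.ae_map_iff]
  exact Filter.Eventually.of_forall fun x => by simp

lemma map_toSphere_apply {A : Set E} (hA : MeasurableSet A) :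
    Measure.map Subtype.val (volume : Measure E).toSphere A =
      Module.finrank ℝ E * volume {x : E | x ≠ 0 ∧ ‖x‖ < 1 ∧ ‖x‖⁻¹ • x ∈ A} := by
  rw [sphere_emb.map_apply, Measure.toSphere_apply' _ (sphere_emb.measurable hA)]
  congr 2
  ext x
  simp only [Set.mem_smul, Set.mem_image, Set.mem_preimage, Set.mem_ofPred_eq]
  constructor
  · rintro ⟨r, ⟨hr0, hr1⟩, _, ⟨y, hy, rfl⟩, rfl⟩
    have hn : ‖(y : E)‖ = 1 := by simp
    have hy0 : (y : E) ≠ 0 := by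
      intro h; rw [h] at hn; simp at hn
    refine ⟨smul_ne_zero hr0.ne' hy0, ?_, ?_⟩
    · rw [norm_smul, hn, Real.norm_of_nonneg hr0.le]; linarith
    · rw [norm_smul, hn, Real.norm_of_nonneg hr0.le, mul_one, smul_smul, inv_mul_cancel₀ hr0.ne',
        one_smul]
      exact hy
  · rintro ⟨h0, h1, hA⟩
    have hn := norm_pos_iff.2 h0
    refine ⟨‖x‖, ⟨hn, h1⟩, ‖x‖⁻¹ • x, ⟨⟨‖x‖⁻¹ • x, ?_⟩, hA, rfl⟩, ?_⟩
    · simp [norm_smul, hn.ne']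
    · rw [smul_smul, mul_inv_cancel₀ hn.ne', one_smul]

lemma map_toSphere_inv (T : E ≃ₗᵢ[ℝ] E) :
    Measure.map T (Measure.map Subtype.val (volume : Measure E).toSphere) =
      Measure.map Subtype.val (volume : Measure E).toSphere := by
  ext A hA
  have hT : MeasurableEmbedding T := T.toHomeomorph.measurableEmbedding
  rw [hT.map_apply, map_toSphere_apply (hT.measurable hA), map_toSphere_apply hA]
  congr 1
  conv_rhs => rw [← T.measurePreserving.measure_preimage_emb hT]
  congr 1
  ext x
  simp

lemma uSph_inv (T : E ≃ₗᵢ[ℝ] E) : Measure.map T (uSph E) = uSph E := by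
  rw [uSph, Measure.map_smul, Measure.map_smul, map_toSphere_inv]

lemma exists_isom {s t : E} (h : ‖s‖ = ‖t‖) : ∃ T : E ≃ₗᵢ[ℝ] E, T s = t :=
  ⟨_, Submodule.reflection_sub h⟩

/-- A measure has a radial characteristic function. -/
def RadChar (μ : Measure E) : Prop := ∀ s t : E, ‖s‖ = ‖t‖ → charFun μ s = charFun μ t

lemma uSph_radChar : RadChar (uSph E) := by
  intro s t h
  obtain ⟨T, rfl⟩ := exists_isom h
  have hT : MeasurableEmbedding T := T.toHomeomorph.measurableEmbedding
  conv_rhs => rw [← uSph_inv T, charFun_apply, hT.integral_map]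
  simp [charFun_apply]

lemma radChar_unique (μ ν : Measure E) [IsProbabilityMeasure μ] [IsProbabilityMeasure ν]
    (hμ : RadChar μ) (hν : RadChar ν) (hμ1 : ∀ᵐ x ∂μ, ‖x‖ = 1) (hν1 : ∀ᵐ x ∂ν, ‖x‖ = 1) :
    μ = ν := by
  apply Measure.ext_of_charFun
  ext t
  have h1 : charFun μ t = ∫ w, charFun μ (‖t‖ • w) ∂ν := by
    have : ∫ w, charFun μ (‖t‖ • w) ∂ν = ∫ w, charFun μ t ∂ν := by
      apply integral_congr_ae
      filter_upwards [hν1] with w hw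
      exact hμ _ _ (by simp [norm_smul, hw])
    rw [this]; simp
  have h2 : charFun ν t = ∫ w, charFun ν (‖t‖ • w) ∂μ := by
    have : ∫ w, charFun ν (‖t‖ • w) ∂μ = ∫ w, charFun ν t ∂μ := by
      apply integral_congr_ae
      filter_upwards [hμ1] with w hw
      exact hν _ _ (by simp [norm_smul, hw])
    rw [this]; simp
  rw [h1, h2]
  simp only [charFun_apply]
  rw [integral_integral_swap]
  · congr 1; ext x; congr 1; ext y
    rw [inner_smul_right, inner_smul_right, real_inner_comm]
  · apply (integrable_const (1 : ℝ)).mono'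
    · apply Continuous.aestronglyMeasurable
      unfold Function.uncurry
      fun_prop
    · exact Filter.Eventually.of_forall fun p => by
        simp only [Function.uncurry]
        rw [Complex.norm_exp_ofReal_mul_I]

/-- Householder reflection taking `e` to `w`. -/
def hh (e w : E) : E ≃ₗᵢ[ℝ] E := (ℝ ∙ (e - w))ᗮ.reflection

lemma hh_self {e w : E} (h : ‖e‖ = ‖w‖) : hh e w e = w := Submodule.reflection_sub h

lemma hh_apply (e w y : E) :
    hh e w y = y - (2 : ℕ) • (inner ℝ (e - w) y / ‖e - w‖ ^ 2) • (e - w) := by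
  rw [hh, Submodule.reflection_orthogonal_apply, Submodule.reflection_singleton_apply]
  simp

lemma hh_inner (e w x y : E) : inner ℝ (hh e w x) y = inner ℝ x (hh e w y) := by
  conv_rhs => rw [← (hh e w).inner_map_map x]
  simp [hh]

lemma hh_measurable (e : E) :
    Measurable fun p : E × ((ℝ ∙ e)ᗮ : Submodule ℝ E) => hh e p.1 (p.2 : E) := by
  simp only [hh_apply]
  have h1 : Measurable fun p : E × ((ℝ ∙ e)ᗮ : Submodule ℝ E) => (p.2 : E) :=
    measurable_subtype_coe.comp measurable_snd
  fun_prop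

/-- The average of the uniform measures on the unit spheres of the hyperplanes. -/
def avgM (e : E) : Measure E :=
  Measure.map (fun p : E × ((ℝ ∙ e)ᗮ : Submodule ℝ E) => hh e p.1 (p.2 : E))
    ((uSph E).prod (uSph ((ℝ ∙ e)ᗮ : Submodule ℝ E)))

lemma norm_proj {e w t : E} (he : ‖e‖ = 1) (hw : ‖w‖ = 1) :
    ‖(ℝ ∙ e)ᗮ.orthogonalProjectionOnto (hh e w t)‖ ^ 2 = ‖t‖ ^ 2 - (inner ℝ w t) ^ 2 := by
  have h := Submodule.norm_sq_eq_add_norm_sq_projection (hh e w t) (ℝ ∙ e)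
  have h2 : ‖(ℝ ∙ e).orthogonalProjectionOnto (hh e w t)‖ ^ 2 = (inner ℝ w t) ^ 2 := by
    rw [Submodule.coe_norm, ← Submodule.starProjection_apply,
      Submodule.starProjection_singleton, norm_smul, he, ← hh_inner, hh_self (by rw [he, hw])]
    simp
  rw [LinearIsometryEquiv.norm_map] at h
  linarith

lemma avgM_eq [Nontrivial E] {e : E} (he : ‖e‖ = 1) [Nontrivial ((ℝ ∙ e)ᗮ : Submodule ℝ E)] :
    avgM e = uSph E := by
  have : IsProbabilityMeasure (avgM e) :=
    Measure.isProbabilityMeasure_map (hh_measurable e).aemeasurable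
  apply radChar_unique _ _ _ uSph_radChar _ uSph_norm
  · have key : ∀ t, charFun (avgM e) t = ∫ w, charFun (uSph ((ℝ ∙ e)ᗮ : Submodule ℝ E))
        ((ℝ ∙ e)ᗮ.orthogonalProjectionOnto (hh e w t)) ∂(uSph E) := by
      intro t
      rw [charFun_apply, avgM, integral_map (hh_measurable e).aemeasurable
        (by apply Continuous.aestronglyMeasurable; fun_prop), integral_prod]
      · congr 1; ext w
        rw [charFun_apply]
        congr 1; ext u
        rw [hh_inner, Submodule.inner_orthogonalProjectionOnto_eq_of_mem_left]
      · apply (integrable_const (1 : ℝ)).mono'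
        · apply Measurable.aestronglyMeasurable
          have := hh_measurable e
          fun_prop
        · exact Filter.Eventually.of_forall fun p => by
            rw [Complex.norm_exp_ofReal_mul_I]
    intro s t hst
    obtain ⟨T, rfl⟩ := exists_isom hst
    have hT : MeasurableEmbedding T := T.toHomeomorph.measurableEmbedding
    rw [key, key]
    conv_rhs => rw [← uSph_inv T, hT.integral_map]
    apply integral_congr_ae
    filter_upwards [uSph_norm] with w hw
    apply uSph_radChar
    rw [← sq_eq_sq₀ (norm_nonneg _) (norm_nonneg _), norm_proj he hw,
      norm_proj he (by simpa using hw)]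
    simp
  · rw [avgM, ae_map_iff (hh_measurable e).aemeasurable
      (measurableSet_eq_fun (by fun_prop) (by fun_prop))]
    have := (Measure.quasiMeasurePreserving_snd (μ := uSph E)
      (ν := uSph ((ℝ ∙ e)ᗮ : Submodule ℝ E))).ae uSph_norm
    filter_upwards [this] with p hp
    simpa using hp

/-- Radial function on the whole space. -/
def rad (K : Set E) (x : E) : ℝ≥0∞ := ⨆ r : {r : ℝ≥0 // (r : ℝ) • x ∈ K}, (r.1 : ℝ≥0∞)

lemma volumeIoiPow_singleton (m : ℕ) (x : Set.Ioi (0 : ℝ)) : Measure.volumeIoiPow m {x} = 0 := by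
  apply withDensity_absolutelyContinuous
  rw [comap_subtype_coe_apply measurableSet_Ioi]
  simp

lemma volumeIoiPow_univ (m : ℕ) : Measure.volumeIoiPow m Set.univ = ∞ := by
  refine ENNReal.eq_top_of_forall_nnreal_le ?_
  intro r
  have hx : (0 : ℝ) < r * (m + 1) + 1 := by positivity
  refine le_trans ?_ (measure_mono (Set.subset_univ (Set.Iio ⟨r * (m + 1) + 1, hx⟩)))
  rw [Measure.volumeIoiPow_apply_Iio, ← ENNReal.ofReal_coe_nnreal]
  apply ENNReal.ofReal_le_ofReal
  rw [le_div_iff₀ (by positivity)]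
  have h1 : (1 : ℝ) ≤ r * (m + 1) + 1 := by
    have : (0 : ℝ) ≤ r * (m + 1) := by positivity
    linarith
  have := le_self_pow₀ h1 (Nat.succ_ne_zero m)
  simp only [Nat.succ_eq_add_one] at this
  linarith

lemma ray_measure (m : ℕ) {K : Set E}
    (hK : ∀ x ∈ K, ∀ lam : ℝ, 0 ≤ lam → lam ≤ 1 → lam • x ∈ K) (x : E) :
    Measure.volumeIoiPow m {r : Set.Ioi (0 : ℝ) | (r : ℝ) • x ∈ K} =
      rad K x ^ (m + 1) / ((m + 1 : ℕ) : ℝ≥0∞) := by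
  have hlt : ∀ r : ℝ≥0, (r : ℝ≥0∞) < rad K x → (r : ℝ) • x ∈ K := by
    intro r hr
    rw [rad, lt_iSup_iff] at hr
    obtain ⟨⟨s, hs⟩, hrs⟩ := hr
    have hrs' : r < s := by exact_mod_cast hrs
    have hs0 : (0 : ℝ) < s := lt_of_le_of_lt r.2 (by exact_mod_cast hrs')
    have := hK _ hs (r / s) (by positivity)
      ((div_le_one hs0).2 (by exact_mod_cast hrs'.le))
    rwa [smul_smul, div_mul_cancel₀ _ hs0.ne'] at this
  have hle : ∀ r : ℝ≥0, (r : ℝ) • x ∈ K → (r : ℝ≥0∞) ≤ rad K x := by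
    intro r hr
    exact le_iSup (fun r : {r : ℝ≥0 // (r : ℝ) • x ∈ K} => (r.1 : ℝ≥0∞)) ⟨r, hr⟩
  generalize rad K x = ρ at hlt hle
  induction ρ with
  | top =>
    have : {r : Set.Ioi (0 : ℝ) | (r : ℝ) • x ∈ K} = Set.univ := by
      ext r
      simp only [Set.mem_ofPred_eq, Set.mem_univ, iff_true]
      exact hlt ⟨r, le_of_lt r.2⟩ ENNReal.coe_lt_top
    rw [this, volumeIoiPow_univ, ENNReal.top_pow (Nat.succ_ne_zero m),
      ENNReal.top_div_of_ne_top (ENNReal.natCast_ne_top _)]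
  | coe ρ =>
    rcases eq_or_ne ρ 0 with rfl | h0
    · have : {r : Set.Ioi (0 : ℝ) | (r : ℝ) • x ∈ K} = ∅ := by
        ext r
        simp only [Set.mem_ofPred_eq, Set.mem_empty_iff_false, iff_false]
        intro hr
        have h1 : (⟨r, le_of_lt r.2⟩ : ℝ≥0) ≤ 0 := 
          ENNReal.coe_le_coe.1 (hle ⟨r, le_of_lt r.2⟩ hr)
        have h2 : (r : ℝ) ≤ 0 := h1
        exact absurd r.2 (not_lt.2 h2)
      rw [this]; simp
    · have hρ : (0 : ℝ) < ρ := by exact_mod_cast pos_iff_ne_zero.2 h0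
      set z : Set.Ioi (0 : ℝ) := ⟨ρ, hρ⟩ with hz
      have : Measure.volumeIoiPow m {r : Set.Ioi (0 : ℝ) | (r : ℝ) • x ∈ K} =
          Measure.volumeIoiPow m (Set.Iio z) := by
        apply le_antisymm
        · have hsub : {r : Set.Ioi (0 : ℝ) | (r : ℝ) • x ∈ K} ⊆ Set.Iio z ∪ {z} := by
            intro r hr
            have h1 : (⟨r, le_of_lt r.2⟩ : ℝ≥0) ≤ ρ := 
              ENNReal.coe_le_coe.1 (hle ⟨r, le_of_lt r.2⟩ hr)
            have h2 : r ≤ z := h1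
            rcases h2.lt_or_eq with h | h
            · exact Or.inl h
            · exact Or.inr h
          refine (measure_mono hsub).trans ((measure_union_le _ _).trans ?_)
          rw [volumeIoiPow_singleton, add_zero]
        · apply measure_mono
          intro r hr
          have hr' : (⟨r, le_of_lt r.2⟩ : ℝ≥0) < ρ := hr
          exact hlt ⟨r, le_of_lt r.2⟩ (ENNReal.coe_lt_coe.2 hr')
      rw [this, Measure.volumeIoiPow_apply_Iio, ENNReal.ofReal_div_of_pos (by positivity),
        ENNReal.ofReal_pow hρ.le, ENNReal.ofReal_coe_nnreal]
      congr 1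
      rw [← ENNReal.ofReal_natCast]; simp

lemma polar (m : ℕ) (hm : Module.finrank ℝ E = m + 1) {K : Set E} (hKm : MeasurableSet K)
    (hK : ∀ x ∈ K, ∀ lam : ℝ, 0 ≤ lam → lam ≤ 1 → lam • x ∈ K) :
    volume K = ∫⁻ u : sphere (0 : E) 1, rad K u ^ (m + 1) / ((m + 1 : ℕ) : ℝ≥0∞)
      ∂(volume : Measure E).toSphere := by
  have : Nontrivial E := Module.nontrivial_of_finrank_pos (R := ℝ) (by omega)
  have h0 : volume K = (volume : Measure E).comap (Subtype.val : ({0}ᶜ : Set E) → E)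
      (Subtype.val ⁻¹' K) := by
    rw [comap_subtype_coe_apply (measurableSet_singleton _).compl, Subtype.image_preimage_coe,
      Set.inter_comm, ← Set.sdiff_eq, measure_sdiff_null (measure_singleton _)]
  have hmp := (Measure.measurePreserving_homeomorphUnitSphereProd (volume : Measure E)).symm
    (homeomorphUnitSphereProd E).toMeasurableEquiv
  rw [h0, ← hmp.measure_preimage (measurable_subtype_coe hKm).nullMeasurableSet,
    Measure.prod_apply (hmp.measurable (measurable_subtype_coe hKm))]
  congr 1
  ext u
  rw [← ray_measure m hK, hm]
  rfl

lemma polar' (m : ℕ) (hm : Module.finrank ℝ E = m + 1) {K : Set E} (hKm : MeasurableSet K)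
    (hK : ∀ x ∈ K, ∀ lam : ℝ, 0 ≤ lam → lam ≤ 1 → lam • x ∈ K) (P : E → ℝ≥0∞)
    (hPm : Measurable P) (hP : ∀ x, ‖x‖ = 1 → P x = rad K x ^ (m + 1)) :
    volume K = ENNReal.ofReal (ballVol (m + 1)) * ∫⁻ u, P u ∂(uSph E) := by
  have : Nontrivial E := Module.nontrivial_of_finrank_pos (R := ℝ) (by omega)
  have hb : (volume (ball (0 : E) 1)) = ENNReal.ofReal (ballVol (m + 1)) := by
    rw [InnerProductSpace.volume_ball, hm, ballVol, ENNReal.ofReal_one, one_pow, one_mul,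
      Real.sqrt_eq_rpow, ← Real.rpow_natCast, ← Real.rpow_mul Real.pi_nonneg]
    congr 3
    ring
  rw [polar m hm hKm hK, uSph, lintegral_map hPm measurable_subtype_coe,
    lintegral_smul_measure, Measure.toSphere_apply_univ, hb, hm]
  have : ∀ u : sphere (0 : E) 1, rad K (u : E) ^ (m + 1) = P u := fun u => (hP u (by simp)).symm
  simp only [this, div_eq_mul_inv]
  rw [lintegral_mul_const (f := fun u : sphere (0 : E) 1 => P u) _
    (hPm.comp measurable_subtype_coe), smul_eq_mul, ← mul_assoc, mul_comm]
  congr 1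
  have hpos : ENNReal.ofReal (ballVol (m + 1)) ≠ 0 := by
    rw [← hb]; exact (measure_ball_pos _ _ one_pos).ne'
  rw [ENNReal.mul_inv (Or.inr ENNReal.ofReal_ne_top) (Or.inr hpos), mul_left_comm,
    ENNReal.mul_inv_cancel hpos ENNReal.ofReal_ne_top, mul_one]

/-- Volume of a hyperplane section, in terms of the sphere of a fixed hyperplane. -/
lemma section_vol (m : ℕ) {e w : E} (he : ‖e‖ = 1) (hw : ‖w‖ = 1)
    (hfr : Module.finrank ℝ ((ℝ ∙ e)ᗮ : Submodule ℝ E) = m + 1) {L : Set E}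
    (hL : MeasurableSet L)
    (hstar : ∀ x ∈ L, ∀ lam : ℝ, 0 ≤ lam → lam ≤ 1 → lam • x ∈ L) (P : E → ℝ≥0∞)
    (hPm : Measurable P) (hP : ∀ x, ‖x‖ = 1 → P x = rad L x ^ (m + 1)) :
    volume {y : ((ℝ ∙ w)ᗮ : Submodule ℝ E) | (y : E) ∈ L} =
      ENNReal.ofReal (ballVol (m + 1)) *
        ∫⁻ u, P (hh e w (u : E)) ∂(uSph ((ℝ ∙ e)ᗮ : Submodule ℝ E)) := by
  have hmap : ((ℝ ∙ e)ᗮ : Submodule ℝ E).map (hh e w).toLinearEquiv.toLinearMap = (ℝ ∙ w)ᗮ := by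
    ext y
    rw [Submodule.mem_map, Submodule.mem_orthogonal_singleton_iff_inner_right]
    have hinv : ∀ z, hh e w (hh e w z) = z := fun z => by simp [hh]
    constructor
    · rintro ⟨x, hx, rfl⟩
      rw [Submodule.mem_orthogonal_singleton_iff_inner_right] at hx
      rw [← hx, ← (hh e w).inner_map_map e x, hh_self (by rw [he, hw])]
      rfl
    · intro hy
      refine ⟨hh e w y, ?_, hinv y⟩
      rw [Submodule.mem_orthogonal_singleton_iff_inner_right, ← hh_inner,
        hh_self (by rw [he, hw])]
      exact hy
  let T : ((ℝ ∙ e)ᗮ : Submodule ℝ E) ≃ₗᵢ[ℝ] ((ℝ ∙ w)ᗮ : Submodule ℝ E) :=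
    ((hh e w).submoduleMap _).trans (LinearIsometryEquiv.ofEq _ _ hmap)
  have hT : ∀ u, ((T u : ((ℝ ∙ w)ᗮ : Submodule ℝ E)) : E) = hh e w (u : E) := fun u => rfl
  rw [← T.measurePreserving.measure_preimage_emb T.toHomeomorph.measurableEmbedding]
  have hpre : (T ⁻¹' {y : ((ℝ ∙ w)ᗮ : Submodule ℝ E) | (y : E) ∈ L}) =
      {u : ((ℝ ∙ e)ᗮ : Submodule ℝ E) | hh e w (u : E) ∈ L} := by
    ext u
    simp [hT]
  have hmeas : Measurable fun u : ((ℝ ∙ e)ᗮ : Submodule ℝ E) => hh e w (u : E) :=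
    (hh e w).continuous.measurable.comp measurable_subtype_coe
  rw [hpre]
  apply polar' m hfr (hmeas hL)
  · intro x hx lam h0 h1
    have := hstar _ hx lam h0 h1
    simpa using this
  · exact hPm.comp hmeas
  · intro x hx
    rw [hP _ (by simpa using hx)]
    congr 1
    simp only [rad, iSup_subtype, Set.mem_preimage, Submodule.coe_smul, map_smul]

end Aux

/-- The mean central hyperplane section volume of a star set equals
`b_{n-1} ∫_{S^{n-1}} ρ_L(θ)^{n-1} d*θ` (case `k = n-1` of
`Ṽ_k(L) = (b_n/b_k) ∫_{G_{n,k}} V_k(L ∩ τ₀) d*τ₀`). -/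
theorem stmt17 (n : ℕ) (hn : 2 ≤ n) (L : Set (EuclideanSpace ℝ (Fin n)))
    (hL : MeasurableSet L)
    (hstar : ∀ x ∈ L, ∀ lam : ℝ, 0 ≤ lam → lam ≤ 1 → lam • x ∈ L)
    (hρ : Measurable (radial n L)) :
    (∫⁻ w, volume {y : ((ℝ ∙ (w : EuclideanSpace ℝ (Fin n)))ᗮ) |
        (y : EuclideanSpace ℝ (Fin n)) ∈ L} ∂(sphMeasure n)) =
      ENNReal.ofReal (ballVol (n - 1)) *
        ∫⁻ θ, radial n L θ ^ ((n : ℝ) - 1) ∂(sphMeasure n) := by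
  obtain ⟨m, rfl⟩ : ∃ m, n = m + 2 := ⟨n - 2, by omega⟩
  have hsph : Measure.map Subtype.val (sphMeasure (m + 2)) = uSph (EuclideanSpace ℝ (Fin (m + 2))) := rfl
  have hnt : Nontrivial (EuclideanSpace ℝ (Fin (m + 2))) := inferInstance
  obtain ⟨e, he⟩ : ∃ e : (EuclideanSpace ℝ (Fin (m + 2))), ‖e‖ = 1 := exists_norm_eq (EuclideanSpace ℝ (Fin (m + 2))) zero_le_one
  have he0 : e ≠ 0 := by rintro rfl; simp at he
  have hfr : ∀ w : (EuclideanSpace ℝ (Fin (m + 2))), w ≠ 0 → Module.finrank ℝ ((ℝ ∙ w)ᗮ : Submodule ℝ (EuclideanSpace ℝ (Fin (m + 2)))) = m + 1 := by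
    intro w hw
    have : Fact (Module.finrank ℝ (EuclideanSpace ℝ (Fin (m + 2))) = (m + 1) + 1) := ⟨by simp⟩
    exact Submodule.finrank_orthogonal_span_singleton hw
  have hnt' : Nontrivial ((ℝ ∙ e)ᗮ : Submodule ℝ (EuclideanSpace ℝ (Fin (m + 2)))) :=
    Module.nontrivial_of_finrank_pos (R := ℝ) (by rw [hfr e he0]; omega)
  set P : (EuclideanSpace ℝ (Fin (m + 2))) → ℝ≥0∞ := Function.extend (Subtype.val : sphere (0 : (EuclideanSpace ℝ (Fin (m + 2)))) 1 → (EuclideanSpace ℝ (Fin (m + 2))))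
    (fun θ => radial (m + 2) L θ ^ (m + 1)) 0 with hPdef
  have hPm : Measurable P :=
    sphere_emb.measurable_extend (hρ.pow_const _) measurable_const
  have hP1 : ∀ θ : sphere (0 : (EuclideanSpace ℝ (Fin (m + 2)))) 1, P θ = radial (m + 2) L θ ^ (m + 1) := fun θ =>
    Subtype.val_injective.extend_apply _ _ _
  have hP : ∀ x : (EuclideanSpace ℝ (Fin (m + 2))), ‖x‖ = 1 → P x = rad L x ^ (m + 1) := fun x hx =>
    hP1 ⟨x, by simpa using hx⟩
  have hsec : ∀ w : sphere (0 : (EuclideanSpace ℝ (Fin (m + 2)))) 1, volume {y : ((ℝ ∙ (w : (EuclideanSpace ℝ (Fin (m + 2)))))ᗮ : Submodule ℝ (EuclideanSpace ℝ (Fin (m + 2)))) | (y : (EuclideanSpace ℝ (Fin (m + 2)))) ∈ L} =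
      ENNReal.ofReal (ballVol (m + 1)) *
        ∫⁻ u, P (hh e (w : (EuclideanSpace ℝ (Fin (m + 2)))) (u : (EuclideanSpace ℝ (Fin (m + 2))))) ∂(uSph ((ℝ ∙ e)ᗮ : Submodule ℝ (EuclideanSpace ℝ (Fin (m + 2))))) := by
    intro w
    exact section_vol m he (by simp) (hfr e he0) hL hstar P hPm hP
  have hexp : ∀ a : ℝ≥0∞, a ^ (((m + 2 : ℕ) : ℝ) - 1) = a ^ (m + 1) := by
    intro a
    rw [← ENNReal.rpow_natCast]
    congr 1
    push_cast; ring
  have hmeas2 : Measurable fun p : (EuclideanSpace ℝ (Fin (m + 2))) × ((ℝ ∙ e)ᗮ : Submodule ℝ (EuclideanSpace ℝ (Fin (m + 2)))) => P (hh e p.1 (p.2 : (EuclideanSpace ℝ (Fin (m + 2))))) :=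
    hPm.comp (hh_measurable e)
  simp only [hsec, hexp, ← hP1]
  rw [← lintegral_map (μ := sphMeasure (m + 2)) hPm measurable_subtype_coe,
    ← lintegral_map (μ := sphMeasure (m + 2)) (f := fun w : (EuclideanSpace ℝ (Fin (m + 2))) => ENNReal.ofReal (ballVol (m + 1)) *
        ∫⁻ u, P (hh e w (u : (EuclideanSpace ℝ (Fin (m + 2))))) ∂(uSph ((ℝ ∙ e)ᗮ : Submodule ℝ (EuclideanSpace ℝ (Fin (m + 2))))))
      (hmeas2.lintegral_prod_right'.const_mul _) measurable_subtype_coe, hsph,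
    lintegral_const_mul _ hmeas2.lintegral_prod_right',
    ← lintegral_prod _ hmeas2.aemeasurable]
  conv_rhs => rw [← avgM_eq he, avgM, lintegral_map hPm (hh_measurable e)]
  rfl
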